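/- Let D be a domain in ℂ and let M be a free maximal ideal of H(D). If f ∈ ki(M) := ⋂_{n=1}^∞ Mⁿ and f ≠ 0, then sup_{ζ ∈ Z_D(f)} ord(f,ζ) = ∞, i.e., for every n ∈ ℕ there exists ζ ∈ Z_D(f) with ord(f,ζ) ≥ n. -/

import Mathlib

set_option synthInstance.maxHeartbeats 400000
set_option maxHeartbeats 800000

/-- The Krull intersection of an ideal `I`: the intersection `⋂_{n=1}^∞ Iⁿ`. -/
def ki {R : Type*} [CommRing R] (I : Ideal R) : Ideal R :=
  ⨅ (n : ℕ) (_ : 1 ≤ n), I ^ n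

/-- The ring `H(D)` of holomorphic functions on a set `D ⊆ ℂ`, realized as the subalgebra of
`D → ℂ` (with pointwise operations) of functions admitting a holomorphic (complex
differentiable) extension to (an ambient function on) `D`. -/
def Hol (D : Set ℂ) : Subalgebra ℂ (D → ℂ) where
  carrier := {f | ∃ F : ℂ → ℂ, DifferentiableOn ℂ F D ∧ ∀ z : D, F z = f z}
  add_mem' := by
    rintro f g ⟨F, hF, hFf⟩ ⟨G, hG, hGg⟩
    exact ⟨F + G, hF.add hG, fun z => by simp [hFf z, hGg z]⟩
  mul_mem' := by
    rintro f g ⟨F, hF, hFf⟩ ⟨G, hG, hGg⟩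
    exact ⟨F * G, hF.mul hG, fun z => by simp [hFf z, hGg z]⟩
  algebraMap_mem' := fun c => ⟨fun _ => c, differentiableOn_const c, fun _ => rfl⟩

/-- The zero set `Z_D(f) = {z ∈ D : f(z) = 0}` of `f ∈ H(D)`. -/
def ZD {D : Set ℂ} (f : Hol D) : Set D := {z | (f : D → ℂ) z = 0}

/-- `ordGE f ζ n` says that the order (multiplicity) of `ζ` as a zero of `f ∈ H(D)` is at
least `n`, expressed by the (equivalent, for `D` open) divisibility condition that
`(z - ζ)^n` divides `f` in `H(D)`. -/
def ordGE {D : Set ℂ} (f : Hol D) (ζ : D) (n : ℕ) : Prop :=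
  ∃ g : Hol D, ∀ z : D, (f : D → ℂ) z = ((z : ℂ) - (ζ : ℂ)) ^ n * (g : D → ℂ) z

/-!
An element `f` of `Iⁿ` lies in `Jⁿ` for some finitely generated ideal `J ⊆ I`, which is proper when
`I` is. The members of a proper finitely generated ideal `J` containing `f` have a common zero `ζ`,
unless `f` vanishes identically near some point, in which case `f` is divisible by all powers of
`z - ζ` there. So `J ⊆ (z - ζ)`, and `(z - ζ)ⁿ` divides `f`.

The common zero exists because functions `f, g₁, …, gᵣ` without common zeros generate the unit
ideal. Near each zero of `f` some `gᵢ` is nonzero, so one can choose poles for functions `uᵢ` that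
make `f uᵢ` and `a = f⁻¹ - ∑ gᵢ uᵢ` holomorphic; then `a f + ∑ (f uᵢ) gᵢ = 1`. Functions with
prescribed poles exist by Mittag-Leffler's theorem, whose convergence factors come from pushing
poles out of `D`, or to infinity, by geometric series.
-/

open Set Filter Topology Polynomial TopologicalSpace

section RemovableSingularity

variable {𝕜 : Type*} [NontriviallyNormedField 𝕜]

/-- `φ` has a removable singularity at `z`: on a punctured neighbourhood of `z` it agrees with a
function analytic at `z`. The value `φ z` itself is irrelevant. -/
def HasRemovableSingularityAt (φ : 𝕜 → 𝕜) (z : 𝕜) : Prop :=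
  ∃ A : 𝕜 → 𝕜, AnalyticAt 𝕜 A z ∧ φ =ᶠ[𝓝[≠] z] A

namespace HasRemovableSingularityAt

variable {φ ψ : 𝕜 → 𝕜} {z : 𝕜}

theorem of_analyticAt (hφ : AnalyticAt 𝕜 φ z) : HasRemovableSingularityAt φ z :=
  ⟨φ, hφ, .rfl⟩

theorem zero : HasRemovableSingularityAt 0 z :=
  of_analyticAt analyticAt_const

theorem congr (hφ : HasRemovableSingularityAt φ z) (h : φ =ᶠ[𝓝[≠] z] ψ) :
    HasRemovableSingularityAt ψ z :=
  let ⟨A, hA, hφA⟩ := hφ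
  ⟨A, hA, h.symm.trans hφA⟩

theorem add (hφ : HasRemovableSingularityAt φ z) (hψ : HasRemovableSingularityAt ψ z) :
    HasRemovableSingularityAt (φ + ψ) z :=
  let ⟨_, hA, hφA⟩ := hφ
  let ⟨_, hB, hψB⟩ := hψ
  ⟨_, hA.add hB, hφA.add hψB⟩

theorem neg (hφ : HasRemovableSingularityAt φ z) : HasRemovableSingularityAt (-φ) z :=
  let ⟨_, hA, hφA⟩ := hφ
  ⟨_, hA.neg, hφA.neg⟩

theorem sub (hφ : HasRemovableSingularityAt φ z) (hψ : HasRemovableSingularityAt ψ z) :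
    HasRemovableSingularityAt (φ - ψ) z :=
  sub_eq_add_neg φ ψ ▸ hφ.add hψ.neg

theorem mul (hφ : HasRemovableSingularityAt φ z) (hψ : HasRemovableSingularityAt ψ z) :
    HasRemovableSingularityAt (φ * ψ) z :=
  let ⟨_, hA, hφA⟩ := hφ
  let ⟨_, hB, hψB⟩ := hψ
  ⟨_, hA.mul hB, hφA.mul hψB⟩

theorem sum {ι : Type*} {s : Finset ι} {φ : ι → 𝕜 → 𝕜}
    (hφ : ∀ i ∈ s, HasRemovableSingularityAt (φ i) z) :
    HasRemovableSingularityAt (∑ i ∈ s, φ i) z :=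
  Finset.sum_induction φ (HasRemovableSingularityAt · z) (fun _ _ => add) zero hφ

theorem meromorphicAt (hφ : HasRemovableSingularityAt φ z) : MeromorphicAt φ z :=
  let ⟨_, hA, hφA⟩ := hφ
  hA.meromorphicAt.congr hφA.symm

theorem meromorphicOrderAt_nonneg (hφ : HasRemovableSingularityAt φ z) :
    0 ≤ meromorphicOrderAt φ z := by
  obtain ⟨A, hA, hφA⟩ := hφ
  rw [meromorphicOrderAt_congr hφA]
  exact hA.meromorphicOrderAt_nonneg

theorem exists_differentiableOn_eventuallyEq {D : Set 𝕜}
    (hφ : ∀ z ∈ D, HasRemovableSingularityAt φ z) :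
    ∃ F : 𝕜 → 𝕜, DifferentiableOn 𝕜 F D ∧ ∀ z ∈ D, F =ᶠ[𝓝[≠] z] φ := by
  have hmer : MeromorphicOn φ D := fun z hz => (hφ z hz).meromorphicAt
  have heq : ∀ z ∈ D, toMeromorphicNFOn φ D =ᶠ[𝓝[≠] z] φ := fun z hz =>
    hmer.toMeromorphicNFOn_eq_self_on_nhdsNE hz
  refine ⟨toMeromorphicNFOn φ D, fun z hz => ?_, heq⟩
  have hord : 0 ≤ meromorphicOrderAt (toMeromorphicNFOn φ D) z :=
    meromorphicOrderAt_congr (heq z hz) ▸ (hφ z hz).meromorphicOrderAt_nonneg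
  have hNF : MeromorphicNFAt (toMeromorphicNFOn φ D) z :=
    meromorphicNFOn_toMeromorphicNFOn φ D hz
  exact (hNF.meromorphicOrderAt_nonneg_iff_analyticAt.1 hord).differentiableAt
    |>.differentiableWithinAt

end HasRemovableSingularityAt

theorem exists_taylor_remainder [CharZero 𝕜] {E : Type*} [NormedAddCommGroup E] [NormedSpace 𝕜 E]
    [CompleteSpace E] {f : 𝕜 → E} {ζ : 𝕜} (hf : AnalyticAt 𝕜 f ζ) (n : ℕ) :
    ∃ (c : ℕ → E) (F : 𝕜 → E), AnalyticAt 𝕜 F ζ ∧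
      ∀ z, f z = ∑ i ∈ Finset.range n, (z - ζ) ^ i • c i + (z - ζ) ^ n • F z := by
  have hf₀ : AnalyticAt 𝕜 (fun z => f (z + ζ)) 0 :=
    AnalyticAt.fun_comp (g := f) (by simpa using hf) (by fun_prop)
  obtain ⟨F, hF, hfF⟩ := hf₀.exists_eq_sum_add_pow_mul n
  refine ⟨fun i => (i.factorial : 𝕜)⁻¹ • iteratedDeriv i (fun z => f (z + ζ)) 0,
    fun z => F (z - ζ), AnalyticAt.fun_comp (by simpa using hF) (by fun_prop), fun z => ?_⟩
  simpa only [sub_add_cancel, smul_smul, div_eq_mul_inv] using hfF (z - ζ)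

theorem exists_principalPart [CharZero 𝕜] [CompleteSpace 𝕜] {p : 𝕜 → 𝕜} {ζ : 𝕜}
    (hp : MeromorphicAt p ζ) :
    ∃ Q : 𝕜[X], HasRemovableSingularityAt (fun z => p z - Q.eval (z - ζ)⁻¹) ζ := by
  obtain ⟨n, hn⟩ := hp
  obtain ⟨c, F, hF, hpF⟩ := exists_taylor_remainder hn n
  refine ⟨∑ i ∈ Finset.range n, C (c i) * X ^ (n - i), F, hF, ?_⟩
  filter_upwards [self_mem_nhdsWithin] with z hz
  have hz : z - ζ ≠ 0 := sub_ne_zero.2 hz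
  apply mul_left_cancel₀ (pow_ne_zero n hz)
  rw [mul_sub, ← smul_eq_mul, hpF z, smul_eq_mul, sub_eq_iff_eq_add', eval_finsetSum,
    Finset.mul_sum]
  congr 1
  refine Finset.sum_congr rfl fun i hi => ?_
  rw [eval_C_mul, eval_pow, eval_X, inv_pow, mul_left_comm,
    ← pow_sub₀ _ hz (Nat.sub_le n i), Nat.sub_sub_self (Finset.mem_range.1 hi).le,
    smul_eq_mul, mul_comm]

end RemovableSingularity

/-- The algebra of restrictions to `K` of holomorphic functions on `D`, as a subalgebra of the
continuous functions on `K`. -/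
def restrictAlgebra (D : Set ℂ) (K : Compacts ℂ) : Subalgebra ℂ C(K, ℂ) where
  carrier := {φ | ∃ F : ℂ → ℂ, DifferentiableOn ℂ F D ∧ ∀ z : K, F z = φ z}
  add_mem' := by
    rintro φ ψ ⟨F, hF, hFφ⟩ ⟨G, hG, hGψ⟩
    exact ⟨F + G, hF.add hG, fun z => congrArg₂ (· + ·) (hFφ z) (hGψ z)⟩
  mul_mem' := by
    rintro φ ψ ⟨F, hF, hFφ⟩ ⟨G, hG, hGψ⟩
    exact ⟨F * G, hF.mul hG, fun z => congrArg₂ (· * ·) (hFφ z) (hGψ z)⟩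
  algebraMap_mem' c := ⟨fun _ => c, differentiableOn_const c, fun _ => rfl⟩

/-- The algebra of functions that are, on the compact set `K`, uniform limits of holomorphic
functions on `D`. The values outside `K` are irrelevant. -/
def approxAlgebra (D : Set ℂ) (K : Compacts ℂ) : Subalgebra ℂ (ℂ → ℂ) where
  carrier := {φ | ∃ S ∈ (restrictAlgebra D K).topologicalClosure, ∀ z : K, S z = φ z}
  add_mem' := by
    rintro φ ψ ⟨S, hS, hSφ⟩ ⟨T, hT, hTψ⟩
    exact ⟨S + T, add_mem hS hT, fun z => congrArg₂ (· + ·) (hSφ z) (hTψ z)⟩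
  mul_mem' := by
    rintro φ ψ ⟨S, hS, hSφ⟩ ⟨T, hT, hTψ⟩
    exact ⟨S * T, mul_mem hS hT, fun z => congrArg₂ (· * ·) (hSφ z) (hTψ z)⟩
  algebraMap_mem' c := ⟨algebraMap ℂ C(K, ℂ) c, Subalgebra.algebraMap_mem _ c, fun _ => rfl⟩

namespace approxAlgebra

variable {D : Set ℂ} {K : Compacts ℂ} {φ ψ : ℂ → ℂ}

theorem congr (hφ : φ ∈ approxAlgebra D K) (h : EqOn φ ψ K) : ψ ∈ approxAlgebra D K :=
  let ⟨S, hS, hSφ⟩ := hφ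
  ⟨S, hS, fun z => (hSφ z).trans (h z.2)⟩

theorem mem_of_differentiableOn (hKD : (K : Set ℂ) ⊆ D) (hφ : DifferentiableOn ℂ φ D) :
    φ ∈ approxAlgebra D K :=
  ⟨⟨fun z => φ z, (hφ.continuousOn.mono hKD).domRestrict⟩,
    Subalgebra.le_topologicalClosure _ ⟨φ, hφ, fun _ => rfl⟩, fun _ => rfl⟩

theorem inv_one_sub_mem (hφ : φ ∈ approxAlgebra D K)
    (hle : ∀ z ∈ K, ‖φ z‖ ≤ 1 / 2) : (fun z => (1 - φ z)⁻¹) ∈ approxAlgebra D K := by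
  obtain ⟨S, hS, hSφ⟩ := hφ
  have hlt : ‖S‖ < 1 := by
    refine ((ContinuousMap.norm_le S (by norm_num)).2 fun z => ?_).trans_lt one_half_lt_one
    exact hSφ z ▸ hle z z.2
  refine ⟨∑' i : ℕ, S ^ i, ?_, fun z => ?_⟩
  · exact (Subalgebra.isClosed_topologicalClosure _).mem_of_tendsto
      (summable_geometric_of_norm_lt_one hlt).hasSum
      (.of_forall fun s => sum_mem fun i _ => pow_mem hS i)
  · have h : (1 - S z) * (∑' i : ℕ, S ^ i) z = 1 :=
      congrArg (fun T : C(K, ℂ) => T z) (mul_neg_geom_series S hlt)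
    simpa only [hSφ z] using eq_inv_of_mul_eq_one_right h

theorem exists_norm_sub_le (hφ : φ ∈ approxAlgebra D K) {ε : ℝ} (hε : 0 < ε) :
    ∃ R : ℂ → ℂ, DifferentiableOn ℂ R D ∧ ∀ z ∈ K, ‖φ z - R z‖ ≤ ε := by
  obtain ⟨S, hS, hSφ⟩ := hφ
  obtain ⟨T, ⟨R, hR, hRT⟩, hST⟩ := Metric.mem_closure_iff.1 hS ε hε
  refine ⟨R, hR, fun z hz => ?_⟩
  rw [← hSφ ⟨z, hz⟩, hRT ⟨z, hz⟩, ← dist_eq_norm]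
  exact (ContinuousMap.dist_apply_le_dist _).trans hST.le

theorem differentiableOn_interior (hKD : (K : Set ℂ) ⊆ D) (hφ : φ ∈ approxAlgebra D K) :
    DifferentiableOn ℂ φ (interior (K : Set ℂ)) := by
  choose R hR hRφ using fun n : ℕ => exists_norm_sub_le hφ (Nat.one_div_pos_of_nat (n := n))
  have hlim : TendstoUniformlyOn R φ atTop (K : Set ℂ) := by
    refine Metric.tendstoUniformlyOn_iff.2 fun ε hε => ?_
    filter_upwards [tendsto_one_div_add_atTop_nhds_zero_nat.eventually_lt_const hε] with n hn z hz
    exact (dist_eq_norm (φ z) (R n z) ▸ hRφ n z hz).trans_lt hn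
  exact (hlim.mono interior_subset).tendstoLocallyUniformlyOn.differentiableOn
    (.of_forall fun n => (hR n).mono (interior_subset.trans hKD)) isOpen_interior

theorem inv_sub_mem_of_two_mul_norm_le (hKD : (K : Set ℂ) ⊆ D) {ζ : ℂ} (hζ : ζ ≠ 0)
    (hle : ∀ z ∈ K, 2 * ‖z‖ ≤ ‖ζ‖) : (fun z => (z - ζ)⁻¹) ∈ approxAlgebra D K := by
  have hgeom : (fun z => (1 - ζ⁻¹ * z)⁻¹) ∈ approxAlgebra D K := by
    refine inv_one_sub_mem (mem_of_differentiableOn hKD (by fun_prop)) fun z hz => ?_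
    rw [norm_mul, norm_inv, inv_mul_le_iff₀ (norm_pos_iff.2 hζ)]
    linarith [hle z hz]
  convert (approxAlgebra D K).smul_mem hgeom (-ζ⁻¹) using 2 with z
  rw [Pi.smul_apply, smul_eq_mul, ← inv_neg, ← mul_inv]
  congr 1
  field_simp
  ring

theorem inv_sub_mem_of_two_mul_dist_le (hKD : (K : Set ℂ) ⊆ D) {ζ b : ℂ} (hb : b ∉ D)
    (hle : ∀ z ∈ K, 2 * dist ζ b ≤ dist z b) : (fun z => (z - ζ)⁻¹) ∈ approxAlgebra D K := by
  have hne : ∀ z ∈ D, z - b ≠ 0 := fun z hz => sub_ne_zero.2 (ne_of_mem_of_not_mem hz hb)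
  have hinv : (fun z => (z - b)⁻¹) ∈ approxAlgebra D K :=
    mem_of_differentiableOn hKD (DifferentiableOn.fun_inv (by fun_prop) hne)
  have hgeom : (fun z => (1 - (ζ - b) * (z - b)⁻¹)⁻¹) ∈ approxAlgebra D K := by
    refine inv_one_sub_mem ((approxAlgebra D K).smul_mem hinv (ζ - b)) fun z hz => ?_
    have hpos : 0 < ‖z - b‖ := norm_pos_iff.2 (hne z (hKD hz))
    have := hle z hz
    rw [norm_mul, norm_inv, ← div_eq_mul_inv, div_le_iff₀ hpos, ← dist_eq_norm, ← dist_eq_norm]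
    linarith
  refine congr (mul_mem hinv hgeom) fun z hz => ?_
  have := hne z (hKD hz)
  simp only [Pi.mul_apply]
  rw [← mul_inv]
  congr 1
  field_simp
  ring

theorem eval_mem (hφ : φ ∈ approxAlgebra D K) (Q : ℂ[X]) :
    (fun z => Q.eval (φ z)) ∈ approxAlgebra D K := by
  have := Algebra.adjoin_le (singleton_subset_iff.2 hφ) (aeval_mem_adjoin_singleton ℂ φ (p := Q))
  rwa [aeval_pi_apply] at this

end approxAlgebra

/-- The compact set of points of `D` of norm at most `2 ^ m` and at distance at least `(1 / 2) ^ m`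
from the complement of `D`. These sets exhaust an open set `D`. -/
def exhaustion (D : Set ℂ) (m : ℕ) : Compacts ℂ where
  carrier := Metric.closedBall 0 (2 ^ m) \ Metric.thickening ((1 / 2) ^ m) Dᶜ
  isCompact' := (isCompact_closedBall _ _).diff Metric.isOpen_thickening

namespace exhaustion

variable {D : Set ℂ}

theorem subset (m : ℕ) : (exhaustion D m : Set ℂ) ⊆ D := fun _ hz =>
  not_notMem.1 fun hzD => hz.2 (Metric.self_subset_thickening (by positivity) _ hzD)

theorem monotone : Monotone (exhaustion D) := fun m n hmn _ hz =>
  ⟨Metric.closedBall_subset_closedBall (pow_le_pow_right₀ one_le_two hmn) hz.1, fun hzn =>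
    hz.2 (Metric.thickening_mono (pow_le_pow_of_le_one (by norm_num) (by norm_num) hmn) _ hzn)⟩

theorem exists_mem_interior (hD : IsOpen D) {z : ℂ} (hz : z ∈ D) :
    ∃ m, z ∈ interior (exhaustion D m : Set ℂ) := by
  have hz_compl : z ∉ closure Dᶜ := hD.isClosed_compl.closure_eq.symm ▸ not_not.2 hz
  have hfar : ∀ᶠ m : ℕ in atTop, z ∉ Metric.cthickening ((1 / 2 : ℝ) ^ m) Dᶜ :=
    (tendsto_pow_atTop_nhds_zero_of_lt_one (by norm_num) (by norm_num)).eventually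
      (Metric.eventually_notMem_cthickening_of_infEDist_pos hz_compl)
  have hnorm : ∀ᶠ m : ℕ in atTop, ‖z‖ < 2 ^ m :=
    (tendsto_pow_atTop_atTop_of_one_lt one_lt_two).eventually_gt_atTop _
  obtain ⟨m, hfar, hnorm⟩ := (hfar.and hnorm).exists
  refine ⟨m, mem_interior.2 ⟨Metric.ball 0 (2 ^ m) \ Metric.cthickening ((1 / 2) ^ m) Dᶜ,
    sdiff_le_sdiff Metric.ball_subset_closedBall (Metric.thickening_subset_cthickening _ _),
    Metric.isOpen_ball.sdiff Metric.isClosed_cthickening, mem_ball_zero_iff.2 hnorm, hfar⟩⟩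

theorem inv_sub_mem_approxAlgebra {m : ℕ} {ζ : ℂ} (hζ : ζ ∉ exhaustion D (m + 1)) :
    (fun z => (z - ζ)⁻¹) ∈ approxAlgebra D (exhaustion D m) := by
  by_cases hball : ζ ∈ Metric.closedBall 0 (2 ^ (m + 1))
  · have hnear : ζ ∈ Metric.thickening ((1 / 2) ^ (m + 1)) Dᶜ := not_notMem.1 fun h => hζ ⟨hball, h⟩
    obtain ⟨b, hb, hζb⟩ := Metric.mem_thickening_iff.1 hnear
    refine approxAlgebra.inv_sub_mem_of_two_mul_dist_le (subset m) hb fun z hz => ?_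
    have hzb : (1 / 2) ^ m ≤ dist z b :=
      not_lt.1 fun h => hz.2 (Metric.mem_thickening_iff.2 ⟨b, hb, h⟩)
    rw [pow_succ] at hζb
    linarith
  · rw [mem_closedBall_zero_iff, not_le, pow_succ] at hball
    refine approxAlgebra.inv_sub_mem_of_two_mul_norm_le (subset m) ?_ fun z hz => ?_
    · exact norm_pos_iff.1 ((by positivity : (0 : ℝ) < 2 ^ m * 2).trans hball)
    · linarith [mem_closedBall_zero_iff.1 hz.1]

end exhaustion

theorem exists_forall_differentiableOn_sub {D : Set ℂ} {K : ℕ → Compacts ℂ} (hK : Monotone K)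
    (hKD : ∀ m, (K m : Set ℂ) ⊆ D) {Q : ℕ → ℂ → ℂ}
    (hQ : ∀ m, Q (m + 1) - Q m ∈ approxAlgebra D (K m)) :
    ∃ u : ℂ → ℂ, ∀ m, DifferentiableOn ℂ (u - Q m) (interior (K m : Set ℂ)) := by
  choose R hR hle using fun m =>
    approxAlgebra.exists_norm_sub_le (hQ m) (pow_pos (one_half_pos (α := ℝ)) m)
  let d (k : ℕ) : ℂ → ℂ := Q (k + 1) - Q k - R k
  refine ⟨fun z => Q 0 z + ∑' k, d k z, fun m => ?_⟩
  have hKm (k : ℕ) : (K m : Set ℂ) ⊆ K (k + m) := hK (Nat.le_add_left m k)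
  have hgeom : Summable fun k => (1 / 2 : ℝ) ^ (k + m) :=
    (summable_nat_add_iff m).2 summable_geometric_two
  have hbound (k : ℕ) (z : ℂ) (hz : z ∈ K m) : ‖d (k + m) z‖ ≤ (1 / 2) ^ (k + m) :=
    hle (k + m) z (hKm k hz)
  have hd (k : ℕ) : DifferentiableOn ℂ (d (k + m)) (interior (K m : Set ℂ)) :=
    (approxAlgebra.differentiableOn_interior (hKD _) <| sub_mem (hQ _) <|
      approxAlgebra.mem_of_differentiableOn (hKD _) (hR _)).mono (interior_mono (hKm k))
  have htail : DifferentiableOn ℂ (fun z => ∑' k, d (k + m) z) (interior (K m : Set ℂ)) :=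
    Complex.differentiableOn_tsum_of_summable_norm hgeom hd isOpen_interior
      fun k z hz => hbound k z (interior_subset hz)
  have hhead : DifferentiableOn ℂ (fun z => ∑ k ∈ Finset.range m, R k z)
      (interior (K m : Set ℂ)) :=
    .fun_sum fun k _ => (hR k).mono (interior_subset.trans (hKD m))
  refine (htail.sub hhead).congr fun z hz => ?_
  have hsum : Summable fun k => d k z :=
    (summable_nat_add_iff m).1 (.of_norm_bounded hgeom fun k => hbound k z (interior_subset hz))
  have htelescope : ∑ k ∈ Finset.range m, d k z = Q m z - Q 0 z - ∑ k ∈ Finset.range m, R k z := by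
    rw [← Finset.sum_range_sub (fun k => Q k z), ← Finset.sum_sub_distrib]
    rfl
  simp only [Pi.sub_apply]
  rw [← hsum.sum_add_tsum_nat_add m, htelescope]
  ring

theorem hasRemovableSingularityAt_sub_sum {p q : ℂ → ℂ → ℂ} {S : Finset ℂ} {z : ℂ}
    (hq : ∀ ζ ∈ S, ζ ≠ z → HasRemovableSingularityAt (q ζ) z)
    (hz : z ∈ S → HasRemovableSingularityAt (p z - q z) z) (hp : z ∉ S → p z = 0) :
    HasRemovableSingularityAt (p z - ∑ ζ ∈ S, q ζ) z := by
  have hpz : p z = ∑ ζ ∈ S, (Pi.single z (p z) : ℂ → ℂ → ℂ) ζ := by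
    rw [Finset.sum_pi_single', ite_eq_left_iff.2 fun h => (hp h).symm]
  rw [hpz, ← Finset.sum_sub_distrib]
  refine .sum fun ζ hζ => ?_
  obtain rfl | hne := eq_or_ne ζ z
  · simpa using hz hζ
  · simpa [hne] using (hq ζ hζ hne).neg

theorem mittag_leffler {D : Set ℂ} (hD : IsOpen D) {p : ℂ → ℂ → ℂ}
    (hmer : ∀ z ∈ D, MeromorphicAt (p z) z) (hp : ∀ z ∈ D, ∀ᶠ w in 𝓝[≠] z, p w = 0) :
    ∃ u : ℂ → ℂ, ∀ z ∈ D, HasRemovableSingularityAt (u - p z) z := by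
  choose! P hP using fun z hz => exists_principalPart (hmer z hz)
  let q (ζ : ℂ) : ℂ → ℂ := fun z => (P ζ).eval (z - ζ)⁻¹
  have hfin (m : ℕ) : ((exhaustion D (m + 1) : Set ℂ) \ {ζ | p ζ = 0}).Finite :=
    (exhaustion D (m + 1)).isCompact.finite_sdiff_of_mem_codiscreteWithin <|
      mem_codiscreteWithin_iff_forall_mem_nhdsNE.2 fun z hz =>
        mem_of_superset (hp z (exhaustion.subset _ hz)) subset_union_left
  let S (m : ℕ) : Finset ℂ := (hfin m).toFinset
  have hmem {m : ℕ} {ζ : ℂ} : ζ ∈ S m ↔ ζ ∈ exhaustion D (m + 1) ∧ p ζ ≠ 0 := (hfin m).mem_toFinset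
  have hSmono (m : ℕ) : S m ⊆ S (m + 1) := fun ζ hζ =>
    hmem.2 ⟨exhaustion.monotone (Nat.le_succ _) (hmem.1 hζ).1, (hmem.1 hζ).2⟩
  have hstep (m : ℕ) :
      ∑ ζ ∈ S (m + 1), q ζ - ∑ ζ ∈ S m, q ζ ∈ approxAlgebra D (exhaustion D m) := by
    rw [← Finset.sum_sdiff_eq_sub (hSmono m)]
    refine sum_mem fun ζ hζ => approxAlgebra.eval_mem (exhaustion.inv_sub_mem_approxAlgebra ?_) _
    obtain ⟨hζ, hζ'⟩ := Finset.mem_sdiff.1 hζ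
    exact fun h => hζ' (hmem.2 ⟨h, (hmem.1 hζ).2⟩)
  obtain ⟨u, hu⟩ := exists_forall_differentiableOn_sub (Q := fun m => ∑ ζ ∈ S m, q ζ)
    exhaustion.monotone exhaustion.subset hstep
  refine ⟨u, fun z hz => ?_⟩
  obtain ⟨m, hm⟩ := exhaustion.exists_mem_interior hD hz
  have hu_reg : HasRemovableSingularityAt (u - ∑ ζ ∈ S m, q ζ) z :=
    .of_analyticAt ((hu m).analyticAt (isOpen_interior.mem_nhds hm))
  have hp_reg : HasRemovableSingularityAt (p z - ∑ ζ ∈ S m, q ζ) z := by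
    refine hasRemovableSingularityAt_sub_sum (fun ζ _ hne => .of_analyticAt ?_)
      (fun _ => hP z hz) fun hzS => ?_
    · have hinv : AnalyticAt ℂ (fun w => (w - ζ)⁻¹) z :=
        AnalyticAt.fun_inv (by fun_prop) (sub_ne_zero.2 hne.symm)
      simpa only [coe_aeval_eq_eval] using hinv.aeval_polynomial (P ζ)
    · exact not_not.1 fun h => hzS (hmem.2 ⟨exhaustion.monotone m.le_succ (interior_subset hm), h⟩)
  simpa using hu_reg.sub hp_reg

theorem exists_bezout_nhdsNE {𝕜 : Type*} [NontriviallyNormedField 𝕜] {ι : Type*} {s : Finset ι}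
    {f : 𝕜 → 𝕜} {g : ι → 𝕜 → 𝕜} {z : 𝕜}
    (hf : AnalyticAt 𝕜 f z) (hg : ∀ i ∈ s, AnalyticAt 𝕜 (g i) z) (hf₀ : ∀ᶠ w in 𝓝[≠] z, f w ≠ 0)
    (hgz : f z = 0 → ∃ i ∈ s, g i z ≠ 0) :
    ∃ p : ι → 𝕜 → 𝕜, (f z ≠ 0 → p = 0) ∧ (∀ i, MeromorphicAt (p i) z) ∧
      (∀ i, HasRemovableSingularityAt (f * p i) z) ∧
        HasRemovableSingularityAt (f⁻¹ - ∑ i ∈ s, g i * p i) z := by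
  classical
  by_cases hfz : f z = 0
  · obtain ⟨i, hi, hgi⟩ := hgz hfz
    have hginv : AnalyticAt 𝕜 (g i)⁻¹ z := (hg i hi).inv hgi
    have hgi_ne : ∀ᶠ w in 𝓝[≠] z, g i w ≠ 0 :=
      ((hg i hi).continuousAt.eventually_ne hgi).filter_mono nhdsWithin_le_nhds
    let h : 𝕜 → 𝕜 := f⁻¹ * (g i)⁻¹
    have hsum : ∑ j ∈ s, g j * (Pi.single i h : ι → 𝕜 → 𝕜) j = g i * h := by
      rw [Finset.sum_eq_single_of_mem i hi fun j _ hji => by simp [hji], Pi.single_eq_same]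
    refine ⟨Pi.single i h, fun h => absurd hfz h, fun j => ?_, fun j => ?_, ?_⟩
    · obtain rfl | hji := eq_or_ne j i
      · simpa only [Pi.single_eq_same] using hf.meromorphicAt.inv.mul hginv.meromorphicAt
      · rw [Pi.single_eq_of_ne hji]
        exact MeromorphicAt.const 0 z
    · obtain rfl | hji := eq_or_ne j i
      · refine (HasRemovableSingularityAt.of_analyticAt hginv).congr ?_
        filter_upwards [hf₀] with w hw
        simp [h, hw]
      · simpa [hji] using HasRemovableSingularityAt.zero
    · rw [hsum]
      refine HasRemovableSingularityAt.zero.congr ?_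
      filter_upwards [hgi_ne] with w hw
      simp only [h, Pi.zero_apply, Pi.sub_apply, Pi.mul_apply, Pi.inv_apply]
      rw [mul_left_comm, mul_inv_cancel₀ hw, mul_one, sub_self]
  · refine ⟨0, fun _ => rfl, fun _ => MeromorphicAt.const 0 z, fun _ => ?_, ?_⟩
    · simpa using HasRemovableSingularityAt.zero
    · simpa using HasRemovableSingularityAt.of_analyticAt (hf.inv hfz)

theorem exists_bezout {D : Set ℂ} (hD : IsOpen D) {ι : Type*} {s : Finset ι} {f : ℂ → ℂ}
    {g : ι → ℂ → ℂ} (hf : DifferentiableOn ℂ f D) (hg : ∀ i, DifferentiableOn ℂ (g i) D)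
    (hf₀ : ∀ z ∈ D, ∀ᶠ w in 𝓝[≠] z, f w ≠ 0) (hfg : ∀ z ∈ D, f z = 0 → ∃ i ∈ s, g i z ≠ 0) :
    ∃ (a : ℂ → ℂ) (b : ι → ℂ → ℂ), DifferentiableOn ℂ a D ∧ (∀ i, DifferentiableOn ℂ (b i) D) ∧
      EqOn (a * f + ∑ i ∈ s, b i * g i) 1 D := by
  have hf_an (z) (hz : z ∈ D) : AnalyticAt ℂ f z := hf.analyticAt (hD.mem_nhds hz)
  have hg_an (i) (z) (hz : z ∈ D) : AnalyticAt ℂ (g i) z := (hg i).analyticAt (hD.mem_nhds hz)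
  choose! p hp_zero hp_mer hfp hgp using fun z hz =>
    exists_bezout_nhdsNE (hf_an z hz) (fun i _ => hg_an i z hz) (hf₀ z hz) (hfg z hz)
  choose u hu using fun i => mittag_leffler hD (p := fun z => p z i) (fun z hz => hp_mer z hz i)
    fun z hz => by
      filter_upwards [hf₀ z hz, mem_nhdsWithin_of_mem_nhds (hD.mem_nhds hz)] with w hw hwD
      exact congrFun (hp_zero w hwD hw) i
  have hb (i) (z) (hz : z ∈ D) : HasRemovableSingularityAt (f * u i) z := by
    have hprod : HasRemovableSingularityAt (f * (u i - p z i)) z :=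
      (HasRemovableSingularityAt.of_analyticAt (hf_an z hz)).mul (hu i z hz)
    simpa [mul_sub] using hprod.add (hfp z hz i)
  have ha (z) (hz : z ∈ D) : HasRemovableSingularityAt (f⁻¹ - ∑ i ∈ s, g i * u i) z := by
    have hsum : HasRemovableSingularityAt (∑ i ∈ s, g i * (u i - p z i)) z :=
      .sum fun i _ => (HasRemovableSingularityAt.of_analyticAt (hg_an i z hz)).mul (hu i z hz)
    simpa [mul_sub] using (hgp z hz).sub hsum
  obtain ⟨a, ha_diff, ha_eq⟩ := HasRemovableSingularityAt.exists_differentiableOn_eventuallyEq ha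
  choose b hb_diff hb_eq using fun i =>
    HasRemovableSingularityAt.exists_differentiableOn_eventuallyEq (hb i)
  refine ⟨a, b, ha_diff, hb_diff, fun z hz => ?_⟩
  have hcont : ContinuousAt (a * f + ∑ i ∈ s, b i * g i) z :=
    ((ha_diff.mul hf).add (.sum fun i _ => (hb_diff i).mul (hg i))).continuousOn.continuousAt
      (hD.mem_nhds hz)
  refine ((hcont.eventuallyEq_nhds_iff_eventuallyEq_nhdsNE continuousAt_const).1 ?_).eq_of_nhds
  filter_upwards [ha_eq z hz, s.eventually_all.2 fun i _ => hb_eq i z hz, hf₀ z hz]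
    with w haw hbw hfw
  have hsum : ∑ i ∈ s, b i w * g i w = f w * ∑ i ∈ s, g i w * u i w := by
    rw [Finset.mul_sum]
    exact Finset.sum_congr rfl fun i hi => by rw [hbw i hi, Pi.mul_apply]; ring
  simp only [Pi.add_apply, Pi.mul_apply, Finset.sum_apply, hsum, haw, Pi.sub_apply, Pi.inv_apply,
    Pi.one_apply]
  rw [sub_mul, inv_mul_cancel₀ hfw]
  ring

theorem exists_fg_le_mem_ideal_pow {R : Type*} [CommSemiring R] {I : Ideal R} {n : ℕ} {f : R}
    (hf : f ∈ I ^ n) : ∃ J ≤ I, J.FG ∧ f ∈ J ^ n := by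
  induction n generalizing f with
  | zero => exact ⟨⊥, bot_le, Submodule.fg_bot, by simp⟩
  | succ n ih =>
    rw [pow_succ] at hf
    refine Submodule.mul_induction_on hf (fun g hg h hh => ?_) ?_
    · obtain ⟨J, hJI, hJ, hgJ⟩ := ih hg
      refine ⟨J ⊔ Ideal.span {h}, sup_le hJI ((Ideal.span_singleton_le_iff_mem I).2 hh),
        Submodule.FG.sup hJ (Submodule.fg_span_singleton h), ?_⟩
      rw [pow_succ]
      exact Ideal.mul_mem_mul (Ideal.pow_right_mono le_sup_left n hgJ)
        (le_sup_right (a := J) (Ideal.mem_span_singleton_self h))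
    · rintro g h ⟨J, hJI, hJ, hgJ⟩ ⟨L, hLI, hL, hhL⟩
      exact ⟨J ⊔ L, sup_le hJI hLI, Submodule.FG.sup hJ hL,
        add_mem (Ideal.pow_right_mono le_sup_left _ hgJ) (Ideal.pow_right_mono le_sup_right _ hhL)⟩

namespace Hol

variable {D : Set ℂ}

/-- The element of `H(D)` given by a function on `ℂ` that is holomorphic on `D`. -/
def ofDifferentiableOn (F : ℂ → ℂ) (hF : DifferentiableOn ℂ F D) : Hol D :=
  ⟨fun z => F z, F, hF, fun _ => rfl⟩

/-- The function `z ↦ z - ζ` in `H(D)`. -/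
def subPoint (ζ : D) : Hol D :=
  ofDifferentiableOn (fun z => z - ζ) (by fun_prop)

theorem ordGE_iff_subPoint_pow_dvd {f : Hol D} {ζ : D} {n : ℕ} :
    ordGE f ζ n ↔ subPoint ζ ^ n ∣ f :=
  exists_congr fun _ =>
    ⟨fun h => Subtype.ext (funext h), fun h => congrFun (congrArg Subtype.val h)⟩

theorem subPoint_dvd_of_apply_eq_zero (hD : IsOpen D) {f : Hol D} {ζ : D}
    (hf : (f : D → ℂ) ζ = 0) : subPoint ζ ∣ f := by
  obtain ⟨F, hF, hFf⟩ := f.2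
  refine ⟨ofDifferentiableOn (dslope F ζ)
    ((Complex.differentiableOn_dslope (hD.mem_nhds ζ.2)).2 hF), Subtype.ext (funext fun z => ?_)⟩
  calc (f : D → ℂ) z = F z - F ζ := by rw [hFf, hFf, hf, sub_zero]
    _ = (z - ζ) * dslope F ζ z := (sub_smul_dslope F ζ z).symm

theorem subPoint_pow_dvd_of_eventually_eq_zero (hD : IsOpen D) {f : Hol D} {ζ : D} {F : ℂ → ℂ}
    (hF : DifferentiableOn ℂ F D) (hFf : ∀ z : D, F z = (f : D → ℂ) z)
    (hζ : ∀ᶠ w in 𝓝 (ζ : ℂ), F w = 0) (n : ℕ) : subPoint ζ ^ n ∣ f := by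
  have hquot : DifferentiableOn ℂ (fun w => F w / (w - ζ) ^ n) D := by
    intro z hz
    refine DifferentiableAt.differentiableWithinAt ?_
    obtain rfl | hne := eq_or_ne z ζ
    · refine (differentiableAt_const (0 : ℂ)).congr_of_eventuallyEq ?_
      filter_upwards [hζ] with w hw
      rw [hw, zero_div]
    · exact (hF.differentiableAt (hD.mem_nhds hz)).fun_div (by fun_prop)
        (pow_ne_zero n (sub_ne_zero.2 hne))
  refine ⟨ofDifferentiableOn _ hquot, Subtype.ext (funext fun z => ?_)⟩
  change (f : D → ℂ) z = (z - ζ) ^ n * (F z / (z - ζ) ^ n)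
  rw [← hFf z]
  obtain hz | hz := eq_or_ne (z : ℂ) ζ
  · rw [hz, hζ.self_of_nhds, zero_div, mul_zero]
  · rw [mul_div_cancel₀ _ (pow_ne_zero n (sub_ne_zero.2 hz))]

theorem exists_le_span_subPoint (hD : IsOpen D) {J : Ideal (Hol D)} (hJ : J.FG) (hJ_top : J ≠ ⊤)
    {f : Hol D} (hfJ : f ∈ J) (hf : ∀ ζ : D, ∃ n, ¬ subPoint ζ ^ n ∣ f) :
    ∃ ζ : D, J ≤ Ideal.span {subPoint ζ} := by
  by_contra! hcon
  refine hJ_top ((Ideal.eq_top_iff_one J).2 ?_)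
  obtain ⟨s, rfl⟩ := hJ
  choose G hG hGg using fun g : Hol D => g.2
  have hf₀ : ∀ z ∈ D, ∀ᶠ w in 𝓝[≠] z, G f w ≠ 0 := by
    intro z hz
    obtain ⟨n, hn⟩ := hf ⟨z, hz⟩
    exact ((hG f).analyticAt (hD.mem_nhds hz)).eventually_eq_zero_or_eventually_ne_zero.resolve_left
      fun h => hn (subPoint_pow_dvd_of_eventually_eq_zero hD (hG f) (hGg f) h n)
  have hzeros : ∀ z ∈ D, G f z = 0 → ∃ g ∈ s, G g z ≠ 0 := by
    intro z hz _
    by_contra! hs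
    refine hcon ⟨z, hz⟩ (Ideal.span_le.2 fun g hg => Ideal.mem_span_singleton.2 ?_)
    exact subPoint_dvd_of_apply_eq_zero hD (hGg g ⟨z, hz⟩ ▸ hs g hg)
  obtain ⟨a, b, ha, hb, hab⟩ := exists_bezout hD (hG f) hG hf₀ hzeros
  have hone : 1 = ofDifferentiableOn a ha * f + ∑ g ∈ s, ofDifferentiableOn (b g) (hb g) * g := by
    refine Subtype.ext (funext fun z => ?_)
    have := hab z.2
    simp only [Pi.add_apply, Pi.mul_apply, Finset.sum_apply, hGg] at this
    simpa [ofDifferentiableOn] using this.symm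
  rw [hone]
  exact add_mem (Ideal.mul_mem_left _ _ hfJ)
    (sum_mem fun g hg => Ideal.mul_mem_left _ _ (Ideal.subset_span hg))

theorem exists_subPoint_pow_dvd (hD : IsOpen D) {I : Ideal (Hol D)} (hI : I ≠ ⊤) {f : Hol D} {n : ℕ}
    (hn : n ≠ 0) (hf : f ∈ I ^ n) : ∃ ζ : D, subPoint ζ ^ n ∣ f := by
  by_contra! hndvd
  obtain ⟨J, hJI, hJ, hfJ⟩ := exists_fg_le_mem_ideal_pow hf
  obtain ⟨ζ, hJζ⟩ := exists_le_span_subPoint hD hJ (ne_top_of_le_ne_top hI hJI)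
    (Ideal.pow_le_self hn hfJ) fun ζ => ⟨n, hndvd ζ⟩
  refine hndvd ζ ?_
  rw [← Ideal.mem_span_singleton, ← Ideal.span_singleton_pow]
  exact Ideal.pow_right_mono hJζ n hfJ

end Hol

theorem sup_order_eq_infty_of_mem_ki_general {D : Set ℂ} (hD : IsOpen D) {I : Ideal (Hol D)}
    (hI : I ≠ ⊤) {f : Hol D} (hf : f ∈ ki I) (n : ℕ) : ∃ ζ ∈ ZD f, ordGE f ζ n := by
  have hfI : f ∈ I ^ (n + 1) := by
    simp only [ki, Submodule.mem_iInf] at hf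
    exact hf (n + 1) n.succ_pos
  obtain ⟨ζ, hζ⟩ := Hol.exists_subPoint_pow_dvd hD hI n.succ_ne_zero hfI
  refine ⟨ζ, ?_, Hol.ordGE_iff_subPoint_pow_dvd.2 ((pow_dvd_pow _ n.le_succ).trans hζ)⟩
  obtain ⟨g, hg⟩ := Hol.ordGE_iff_subPoint_pow_dvd.2 hζ
  change (f : D → ℂ) ζ = 0
  rw [hg ζ, sub_self, zero_pow n.succ_ne_zero, zero_mul]

/-- Let `D` be a domain in `ℂ`, and `M` a free maximal ideal of `H(D)`. If
`f ∈ ki(M) = ⋂_{n=1}^∞ Mⁿ` and `f ≠ 0`, then `sup_{ζ ∈ Z_D(f)} ord(f,ζ) = ∞`: for every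
`n ∈ ℕ` there is a zero `ζ` of `f` of order at least `n`. -/
theorem sup_order_eq_infty_of_mem_ki {D : Set ℂ} (hD : IsOpen D) (hDconn : IsConnected D)
    (M : Ideal (Hol D)) (hM : M.IsMaximal)
    (hfree : (⋂ g ∈ M, ZD g) = (∅ : Set D))
    (f : Hol D) (hf : f ∈ ki M) (hf0 : f ≠ 0) :
    ∀ n : ℕ, ∃ ζ ∈ ZD f, ordGE f ζ n :=
  sup_order_eq_infty_of_mem_ki_general hD hM.ne_top hf
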